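/- arXiv:2307.11716 — 2 statements merged into one kernel-verified Lean document; each statement's English description precedes it below -/
import Mathlib

section
/- Let F be a field and n ≥ 1. Let D be a central simple F-algebra with dim_F D = 4n², and let E ⊆ D be a commutative F-subalgebra with dim_F E = 2 that is étale over F, with nontrivial F-algebra automorphism σ of E, such that D is free as a left E-module. Set D₊ = {x ∈ D : ax = xa for all a ∈ E} and D₋ = {x ∈ D : ax = xσ(a) for all a ∈ E}. Let g, g₊, g₋ ∈ D with g = g₊ + g₋, g₊ ∈ D₊, g₋ ∈ D₋, and suppose g, g₊, g₋ are all invertible in D. Set z = g₊⁻¹g₋ and assume there is a monic separable polynomial δ ∈ F[T] of degree n with δ(0) ≠ 0 and δ(1) ≠ 0 such that the characteristic polynomial of the F-linear endomorphism x ↦ z²x of D equals δ(T)^{4n}. Then: (1) the F-subalgebra L := F[z²] of D generated by z² is isomorphic to F[T]/(δ(T)) as an F-algebra; in particular dim_F L = n and L is an étale F-algebra; (2) the elements of E commute with those of L, the multiplication map E ⊗_F L → D is an injective F-algebra homomorphism, and its image E·L has dimension 2n over F; (3) the F-subalgebra B of D generated by E ∪ g⁻¹Eg equals the F-subalgebra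 generated by E ∪ {z}; dim_F B = 4n; the center of B equals L; B is free of rank 4 as an L-module; and B equals the centralizer {x ∈ D : xy = yx for all y ∈ L} of L in D. -/
open Polynomial TensorProduct

/-!
Write `κ = ζz - zζ` for a generator `ζ` of `E`; it is a unit because `κ = z(σζ - ζ)`. If `x + yz`
commutes with `ζ`, where `x, y` do, then `yκ = 0`; hence `L = F[z²]` satisfies `L ∩ Lz = 0` and
`L ⊕ Lz ⊆ F[z]`. After extending scalars to split `D`, a subalgebra generated by one element
has dimension at most `2n`, with equality only if it is its own centralizer. Since `δ` divides the
minimal polynomial of `z²`, it follows that `dim L = n` and `C(z) = F[z]`.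

For `c ∈ C(z²)` both `zc + cz` and `z(ζc) + (ζc)z` lie in `C(z)`, and together they determine
`κc`, hence `c`. So `dim C(z²) ≤ 2 dim C(z) = 4n`, and the free `L`-module on `1, ζ, z, ζz`
inside `F[E, z]` already has this dimension.

Finally `g = g₊(1 + z)` gives `g⁻¹ag = (1 + z)⁻¹a(1 + z)` for `a ∈ E`, and
`(1 + z)(σζ - g⁻¹ζg) = σζ - ζ` recovers `z` from `E` and `g⁻¹Eg`.
-/

section UnitCommutator

variable {R : Type*} [Ring R] {ζ z : R}

theorem right_eq_zero_of_commute_add_mul {x y : R} (hκ : IsUnit (ζ * z - z * ζ))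
    (hx : Commute x ζ) (hy : Commute y ζ) (h : Commute (x + y * z) ζ) : y = 0 := by
  have hyκ : y * (ζ * z - z * ζ) = 0 := by
    have h' : (x + y * z) * ζ = ζ * (x + y * z) := h.eq
    rw [add_mul, mul_add, hx.eq, ← mul_assoc ζ y z, ← hy.eq] at h'
    rw [mul_sub, sub_eq_zero, ← mul_assoc, ← mul_assoc]
    exact (add_left_cancel h').symm
  exact hκ.mul_left_eq_zero.mp hyκ

theorem eq_zero_of_commute_sum_mul {c : Fin 4 → R} (hκ : IsUnit (ζ * z - z * ζ))
    (hcζ : ∀ i, Commute (c i) ζ) (hcz : ∀ i, Commute (c i) z)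
    (hζ : Commute (∑ i, c i * ![1, ζ, z, ζ * z] i) ζ)
    (hz : Commute (∑ i, c i * ![1, ζ, z, ζ * z] i) z) : ∀ i ≠ 0, c i = 0 := by
  have hκ' : IsUnit (z * ζ - ζ * z) := by simpa only [neg_sub] using hκ.neg
  have hsum : ∑ i, c i * ![1, ζ, z, ζ * z] i = (c 0 + c 1 * ζ) + (c 2 + c 3 * ζ) * z := by
    simp [Fin.sum_univ_four, add_mul, mul_assoc, add_assoc]
  have comm_ζ (i j) : Commute (c i + c j * ζ) ζ :=
    (hcζ i).add_left ((hcζ j).mul_left (Commute.refl ζ))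
  have h₂₃ : c 2 + c 3 * ζ = 0 :=
    right_eq_zero_of_commute_add_mul hκ (comm_ζ 0 1) (comm_ζ 2 3) (hsum ▸ hζ)
  have h₃ : c 3 = 0 := right_eq_zero_of_commute_add_mul hκ' (hcz 2) (hcz 3)
    (h₂₃ ▸ Commute.zero_left z)
  have h₂ : c 2 = 0 := by simpa [h₃] using h₂₃
  have h₁ : c 1 = 0 := right_eq_zero_of_commute_add_mul hκ' (hcz 0) (hcz 1)
    (by simpa [hsum, h₂₃] using hz)
  intro i hi
  fin_cases i
  exacts [absurd rfl hi, h₁, h₂, h₃]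

theorem commute_mul_add_mul {c : R} (h : Commute c (z * z)) : Commute (z * c + c * z) z := by
  have : c * z * z = z * z * c := by rw [mul_assoc, h.eq]
  simp only [Commute, SemiconjBy, add_mul, mul_add, this, mul_assoc, add_comm]

theorem commutator_mul_eq (c : R) :
    (ζ * z - z * ζ) * c = ζ * (z * c + c * z) - (z * (ζ * c) + ζ * c * z) := by
  noncomm_ring

end UnitCommutator

section CyclicEndomorphism

theorem adjoin_singleton_le_centralizer_singleton {R A : Type*} [CommSemiring R] [Semiring A]
    [Algebra R A] (a : A) : Algebra.adjoin R {a} ≤ Subalgebra.centralizer R {a} :=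
  fun _ hx _ ha ↦ ha ▸ (Algebra.commute_of_mem_adjoin_self hx).eq

variable {K V : Type*} [Field K] [AddCommGroup V] [Module K V] [Module.Finite K V]

theorem exists_injective_applyₗ_adjoin_singleton (T : Module.End K V) : ∃ v : V,
    Function.Injective (LinearMap.applyₗ v ∘ₗ (Algebra.adjoin K {T}).val.toLinearMap) := by
  obtain ⟨v, hv⟩ :=
    Module.exists_ker_toSpanSingleton_eq_annihilator K[X] (Module.AEval' T)
  obtain ⟨v, rfl⟩ := (Module.AEval'.of T).surjective v
  refine ⟨v, LinearMap.ker_eq_bot.mp (LinearMap.ker_eq_bot'.mpr ?_)⟩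
  rintro ⟨f, hf⟩ (hfv : f v = 0)
  obtain ⟨p, rfl : aeval T p = f⟩ := Algebra.adjoin_singleton_eq_range_aeval K T ▸ hf
  have hp : p ∈ Module.annihilator K[X] (Module.AEval' T) := by
    rw [← hv, LinearMap.mem_ker, LinearMap.toSpanSingleton_apply, ← Module.AEval.of_aeval_smul,
      Module.End.smul_def, hfv, map_zero]
  exact Subtype.ext ((Module.AEval.annihilator_eq_ker_aeval (M := V) T).le hp)

theorem finrank_adjoin_singleton_le_finrank (T : Module.End K V) :
    Module.finrank K (Algebra.adjoin K {T}) ≤ Module.finrank K V :=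
  have ⟨_, hv⟩ := exists_injective_applyₗ_adjoin_singleton T
  LinearMap.finrank_le_finrank_of_injective hv

theorem centralizer_singleton_eq_adjoin_of_finrank_eq {T : Module.End K V}
    (hT : Module.finrank K (Algebra.adjoin K {T}) = Module.finrank K V) :
    Subalgebra.centralizer K {T} = Algebra.adjoin K {T} := by
  obtain ⟨v, hv⟩ := exists_injective_applyₗ_adjoin_singleton T
  have hv_surj := (LinearMap.injective_iff_surjective_of_finrank_eq_finrank hT).mp hv
  refine le_antisymm (fun c hc ↦ ?_) (adjoin_singleton_le_centralizer_singleton T)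
  have comm {f g : Module.End K V} (hf : Commute T f) (hg : g ∈ Algebra.adjoin K {T}) (w : V) :
      f (g w) = g (f w) :=
    congr($((Algebra.commute_of_mem_adjoin_singleton_of_commute hg hf.symm).eq) w)
  obtain ⟨⟨f, hf⟩, hfv : f v = c v⟩ := hv_surj (c v)
  suffices c = f from this ▸ hf
  ext w
  obtain ⟨⟨g, hg⟩, rfl : g v = w⟩ := hv_surj w
  rw [comm (hc T rfl) hg, ← hfv, comm (Algebra.commute_of_mem_adjoin_self hf) hg]

end CyclicEndomorphism

section BaseChange

variable (F D : Type*) [Field F] [Ring D] [Algebra F D]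

section Bimodule

attribute [local instance] instModuleTensorProductMop

theorem tmul_op_smul (c d x : D) : (c ⊗ₜ[F] MulOpposite.op d) • x = c * x * d :=
  AlgHom.mulLeftRight_apply F D c (.op d) x

theorem isSimpleModule_tensorProduct_mop [IsSimpleRing D] :
    IsSimpleModule (D ⊗[F] Dᵐᵒᵖ) D := by
  refine isSimpleModule_iff_toSpanSingleton_surjective.mpr ⟨inferInstance, fun x hx ↦ ?_⟩
  let N := LinearMap.range (LinearMap.toSpanSingleton (D ⊗[F] Dᵐᵒᵖ) D x)
  have mul_mem (c d : D) {y : D} (hy : y ∈ N) : c * y * d ∈ N := by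
    rw [← tmul_op_smul F]
    exact N.smul_mem _ hy
  let I : TwoSidedIdeal D := .mk' N N.zero_mem N.add_mem N.neg_mem
    (fun {c y} hy ↦ by simpa using mul_mem c 1 hy) (fun {y d} hy ↦ by simpa using mul_mem 1 d hy)
  have mem_I {y : D} : y ∈ I ↔ y ∈ N := TwoSidedIdeal.mem_mk' ..
  have one_mem : (1 : D) ∈ N := mem_I.mp <|
    IsSimpleRing.one_mem_of_ne_zero_mem I hx (mem_I.mpr ⟨1, by simp⟩)
  intro y
  have hy := mul_mem y 1 one_mem
  rwa [mul_one, mul_one] at hy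

-- As a `D`-bimodule `D` is simple with endomorphism ring `F`, so Jacobson density applies.
theorem mulLeftRight_surjective [Algebra.IsCentral F D] [IsSimpleRing D] [Module.Finite F D] :
    Function.Surjective (AlgHom.mulLeftRight F D) := by
  have := isSimpleModule_tensorProduct_mop F D
  have central (φ : Module.End (D ⊗[F] Dᵐᵒᵖ) D) : ∃ a : F, ∀ x, φ x = a • x := by
    have left_right (c d x : D) : φ (c * x * d) = c * φ x * d := by
      simpa only [tmul_op_smul] using φ.map_smul (c ⊗ₜ[F] .op d) x
    have hφ (x : D) : φ x = x * φ 1 := by simpa using left_right x 1 1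
    obtain ⟨a, ha⟩ := (Algebra.IsCentral.mem_center_iff F).mp
      (Subalgebra.mem_center_iff.mpr fun x ↦
        show x * φ 1 = φ 1 * x by rw [← hφ]; simpa using left_right 1 x 1)
    exact ⟨a, fun x ↦ by rw [hφ, ha, Algebra.smul_def, Algebra.commutes]⟩
  intro f
  let f' : Module.End (Module.End (D ⊗[F] Dᵐᵒᵖ) D) D :=
    { toFun := f
      map_add' := map_add f
      map_smul' φ x := by
        obtain ⟨a, ha⟩ := central φ
        simp only [Module.End.smul_def, ha, map_smul, RingHom.id_apply] }
  obtain ⟨s, hs⟩ := Module.Finite.fg_top (R := F) (M := D)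
  obtain ⟨t, ht⟩ := jacobson_density f' s
  exact ⟨t, LinearMap.ext_on hs fun x hx ↦ (ht x hx).symm⟩

end Bimodule

variable {F D} {A : Type*} [Ring A] [Algebra F A]

theorem lTensor_mem_of_mem_twoSidedIdeal [Algebra.IsCentral F D] [IsSimpleRing D]
    [Module.Finite F D] (f : Module.End F D) (I : TwoSidedIdeal (A ⊗[F] D)) {x : A ⊗[F] D}
    (hx : x ∈ I) : f.lTensor A x ∈ I := by
  obtain ⟨t, rfl⟩ := mulLeftRight_surjective F D f
  induction t using TensorProduct.induction_on with
  | zero => simp [I.zero_mem]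
  | add s t hs ht =>
    simpa only [map_add, LinearMap.lTensor_add, LinearMap.add_apply] using I.add_mem hs ht
  | tmul c d =>
    have : LinearMap.lTensor A (AlgHom.mulLeftRight F D (c ⊗ₜ d)) =
        LinearMap.mulLeftRight F ((1 : A) ⊗ₜ[F] c, (1 : A) ⊗ₜ[F] d.unop) := by
      ext; simp
    rw [this, LinearMap.mulLeftRight_apply]
    exact I.mul_mem_right _ _ (I.mul_mem_left _ _ hx)

theorem exists_tmul_one_mem_of_mem_twoSidedIdeal [Algebra.IsCentral F D] [IsSimpleRing D]
    [Module.Finite F D] (I : TwoSidedIdeal (A ⊗[F] D)) {x : A ⊗[F] D} (hx : x ∈ I) (hx0 : x ≠ 0) :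
    ∃ a : A, a ≠ 0 ∧ a ⊗ₜ[F] (1 : D) ∈ I := by
  classical
  let b := Module.finBasis F D
  obtain ⟨i, hi⟩ : ∃ i, TensorProduct.equivFinsuppOfBasisRight b x i ≠ 0 := by
    by_contra! h
    exact hx0 ((LinearEquiv.map_eq_zero_iff _).mp (Finsupp.ext h))
  have h : (Algebra.linearMap F D ∘ₗ b.coord i).lTensor A x =
      TensorProduct.equivFinsuppOfBasisRight b x i ⊗ₜ 1 := by
    rw [TensorProduct.equivFinsuppOfBasisRight_apply]
    suffices (Algebra.linearMap F D ∘ₗ b.coord i).lTensor A =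
        (TensorProduct.mk F A D).flip 1 ∘ₗ TensorProduct.rid F A ∘ₗ (b.coord i).lTensor A from
      congr($this x)
    ext a d
    simp [Algebra.algebraMap_eq_smul_one, TensorProduct.tmul_smul, TensorProduct.smul_tmul']
  exact ⟨_, hi, h ▸ lTensor_mem_of_mem_twoSidedIdeal _ I hx⟩

theorem isSimpleRing_tensorProduct [IsSimpleRing A] [Algebra.IsCentral F D] [IsSimpleRing D]
    [Module.Finite F D] : IsSimpleRing (A ⊗[F] D) := by
  refine .of_eq_bot_or_eq_top fun I ↦ or_iff_not_imp_left.mpr fun hI ↦ ?_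
  obtain ⟨x, hx, hx0⟩ : ∃ x ∈ I, x ≠ 0 := by
    by_contra! h
    exact hI (eq_bot_iff.mpr fun x hx ↦ h x hx)
  obtain ⟨a, ha0, ha⟩ := exists_tmul_one_mem_of_mem_twoSidedIdeal I hx hx0
  let incl : A →ₐ[F] A ⊗[F] D := Algebra.TensorProduct.includeLeft
  have one_mem : 1 ∈ I.comap incl := IsSimpleRing.one_mem_of_ne_zero_mem (I.comap incl) ha0
    ((TwoSidedIdeal.mem_comap incl).mpr ha)
  exact TwoSidedIdeal.eq_top I ((TwoSidedIdeal.mem_comap incl).mp one_mem)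

end BaseChange

section CentralSimple

theorem finrank_le_finrank_of_forall_one_tmul_mem {F K V W : Type*} [Field F] [Field K]
    [Algebra F K] [AddCommGroup V] [Module F V] [AddCommGroup W] [Module K W] [Module.Finite K W]
    {φ : K ⊗[F] V →ₗ[K] W} (hφ : Function.Injective φ) {S : Submodule F V} {T : Submodule K W}
    (h : ∀ s ∈ S, φ (1 ⊗ₜ s) ∈ T) : Module.finrank F S ≤ Module.finrank K T := by
  let ψ : K ⊗[F] S →ₗ[K] W := φ ∘ₗ S.subtype.baseChange K
  have hψ : Function.Injective ψ := hφ.comp <|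
    Module.Flat.lTensor_preserves_injective_linearMap S.subtype S.subtype_injective
  have hψT (t : K ⊗[F] S) : ψ t ∈ T := by
    induction t using TensorProduct.induction_on with
    | zero => simp
    | add _ _ hx hy => simpa only [map_add] using T.add_mem hx hy
    | tmul k s =>
      have : ψ (k ⊗ₜ s) = k • φ (1 ⊗ₜ s) := by simp [ψ, ← map_smul, smul_tmul']
      exact this ▸ T.smul_mem k (h s s.2)
  rw [← Module.finrank_baseChange (R := K)]
  exact LinearMap.finrank_le_finrank_of_injective (f := ψ.codRestrict T hψT)
    fun _ _ hxy ↦ hψ congr(Subtype.val $hxy)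

variable {F D : Type*} [Field F] [Ring D] [Algebra F D]

theorem exists_algEquiv_end_tensorProduct [Algebra.IsCentral F D] [IsSimpleRing D]
    [Module.Finite F D] {N : ℕ} (hN : Module.finrank F D = N ^ 2) (K : Type*) [Field K]
    [IsAlgClosed K] [Algebra F K] :
    Nonempty (K ⊗[F] D ≃ₐ[K] Module.End K (Fin N → K)) := by
  have := isSimpleRing_tensorProduct (F := F) (D := D) (A := K)
  obtain ⟨m, _, ⟨e⟩⟩ := IsSimpleRing.exists_algEquiv_matrix_of_isAlgClosed K (K ⊗[F] D)
  have hm : m ^ 2 = N ^ 2 := by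
    rw [← hN, ← Module.finrank_baseChange (R := K), e.toLinearEquiv.finrank_eq,
      Module.finrank_matrix]
    simp [sq]
  obtain rfl := Nat.pow_left_injective two_ne_zero hm
  exact ⟨e.trans Matrix.toLinAlgEquiv'⟩

theorem finrank_adjoin_singleton_le_finrank_adjoin_singleton {K A : Type*} [Field K] [Algebra F K]
    [Ring A] [Algebra K A] [Module.Finite K A] (e : K ⊗[F] D ≃ₐ[K] A) (z : D) :
    Module.finrank F (Algebra.adjoin F {z}) ≤ Module.finrank K (Algebra.adjoin K {e (1 ⊗ₜ z)}) := by
  refine finrank_le_finrank_of_forall_one_tmul_mem (φ := e.toLinearMap) e.injective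
    (S := Subalgebra.toSubmodule (Algebra.adjoin F {z}))
    (T := Subalgebra.toSubmodule (Algebra.adjoin K {e (1 ⊗ₜ z)})) fun x hx ↦ ?_
  obtain ⟨p, rfl : aeval z p = x⟩ := Algebra.adjoin_singleton_eq_range_aeval F z ▸ hx
  have : e (1 ⊗ₜ aeval z p) = aeval (e (1 ⊗ₜ z)) (p.map (algebraMap F K)) :=
    calc e (1 ⊗ₜ aeval z p)
        = e (aeval ((1 : K) ⊗ₜ[F] z) p) := congr(e
          $(aeval_algHom_apply (Algebra.TensorProduct.includeRight : D →ₐ[F] K ⊗[F] D) z p)).symm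
      _ = e (aeval ((1 : K) ⊗ₜ[F] z) (p.map (algebraMap F K))) := by rw [aeval_map_algebraMap]
      _ = aeval (e (1 ⊗ₜ z)) (p.map (algebraMap F K)) := (aeval_algHom_apply e _ _).symm
  exact this ▸ aeval_mem_adjoin_singleton K _

variable [Algebra.IsCentral F D] [IsSimpleRing D] [Module.Finite F D] {N : ℕ}

theorem finrank_adjoin_singleton_le_of_finrank_eq_sq (hN : Module.finrank F D = N ^ 2) (z : D) :
    Module.finrank F (Algebra.adjoin F {z}) ≤ N := by
  obtain ⟨e⟩ := exists_algEquiv_end_tensorProduct hN (AlgebraicClosure F)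
  simpa using (finrank_adjoin_singleton_le_finrank_adjoin_singleton e z).trans
    (finrank_adjoin_singleton_le_finrank (e (1 ⊗ₜ z)))

theorem centralizer_singleton_eq_adjoin_of_finrank_eq_sq (hN : Module.finrank F D = N ^ 2) {z : D}
    (hz : Module.finrank F (Algebra.adjoin F {z}) = N) :
    Subalgebra.centralizer F {z} = Algebra.adjoin F {z} := by
  let K := AlgebraicClosure F
  obtain ⟨e⟩ := exists_algEquiv_end_tensorProduct hN K
  have hT : Module.finrank K (Algebra.adjoin K {e (1 ⊗ₜ z)}) = N := le_antisymm
    (by simpa using finrank_adjoin_singleton_le_finrank (e (1 ⊗ₜ z)))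
    (hz ▸ finrank_adjoin_singleton_le_finrank_adjoin_singleton e z)
  have hC : Module.finrank F (Subalgebra.centralizer F {z}) ≤ N := by
    rw [← hT, ← centralizer_singleton_eq_adjoin_of_finrank_eq (by simpa using hT)]
    refine finrank_le_finrank_of_forall_one_tmul_mem (φ := e.toLinearMap) e.injective
      (S := Subalgebra.toSubmodule (Subalgebra.centralizer F {z}))
      (T := Subalgebra.toSubmodule (Subalgebra.centralizer K {e (1 ⊗ₜ z)})) fun c hc ↦ ?_
    rintro _ rfl
    have : z * c = c * z := hc z rfl
    simp [← map_mul, this]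
  exact (Subalgebra.eq_of_le_of_finrank_le (adjoin_singleton_le_centralizer_singleton z)
    (hC.trans hz.ge)).symm

end CentralSimple

section Minpoly

theorem sub_dvd_aeval_sub_of_commute {R A : Type*} [CommRing R] [Ring A] [Algebra R A] {x y : A}
    (h : Commute x y) (p : R[X]) : x - y ∣ aeval x p - aeval y p := by
  simp only [aeval_eq_sum_range, ← Finset.sum_sub_distrib, ← smul_sub]
  exact Finset.dvd_sum fun i _ ↦ (h.sub_dvd_pow_sub_pow i).trans ⟨algebraMap R A (p.coeff i), by
    rw [Algebra.smul_def, Algebra.commutes]⟩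

theorem matrix_charpoly_dvd_pow_card_of_aeval_eq_zero {R ι : Type*} [CommRing R] [Fintype ι]
    [DecidableEq ι] {M : Matrix ι ι R} {p : R[X]} (h : aeval M p = 0) :
    M.charpoly ∣ p ^ Fintype.card ι := by
  have hX : aeval (R := R) (Matrix.scalar ι (X : R[X])) p = Matrix.scalar ι p := by
    simpa using aeval_algHom_apply (Matrix.scalarAlgHom ι R (α := R[X])) X p
  have hM : aeval ((CAlgHom (R := R)).mapMatrix M) p = 0 := by rw [aeval_algHom_apply, h, map_zero]
  have hdvd : M.charmatrix ∣ Matrix.scalar ι p := by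
    have := sub_dvd_aeval_sub_of_commute (Matrix.scalar_commute X (Commute.all X)
      ((CAlgHom (R := R)).mapMatrix M)) p
    rwa [hX, hM, sub_zero] at this
  simpa [Matrix.charpoly] using map_dvd Matrix.detMonoidHom hdvd

theorem dvd_minpoly_of_separable_of_dvd_charpoly {F V : Type*} [Field F] [AddCommGroup V]
    [Module F V] [Module.Finite F V] {T : Module.End F V} {p : F[X]} (hp : p.Separable)
    (h : p ∣ T.charpoly) : p ∣ minpoly F T := by
  let b := Module.finBasis F V
  rw [← LinearMap.charpoly_toMatrix T b] at h
  rw [← LinearMap.minpoly_toMatrix b]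
  exact hp.squarefree.isRadical _ _
    (h.trans (matrix_charpoly_dvd_pow_card_of_aeval_eq_zero (minpoly.aeval F _)))

variable {F A : Type*} [Field F] [Ring A] [Algebra F A]

theorem nonempty_algEquiv_adjoin_singleton_quotient_minpoly (x : A) :
    Nonempty (Algebra.adjoin F {x} ≃ₐ[F] F[X] ⧸ Ideal.span {minpoly F x}) := by
  have hker : RingHom.ker (aeval (R := F) x).rangeRestrict = Ideal.span {minpoly F x} := by
    ext p
    rw [AlgHom.ker_rangeRestrict, RingHom.mem_ker, Ideal.mem_span_singleton, minpoly.dvd_iff]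
  rw [Algebra.adjoin_singleton_eq_range_aeval]
  exact ⟨(Ideal.quotientKerAlgEquivOfSurjective (AlgHom.rangeRestrict_surjective _)).symm.trans
    (Ideal.quotientEquivAlgOfEq F hker)⟩

theorem finrank_adjoin_singleton_eq_natDegree_minpoly (x : A) :
    Module.finrank F (Algebra.adjoin F {x}) = (minpoly F x).natDegree := by
  obtain ⟨e⟩ := nonempty_algEquiv_adjoin_singleton_quotient_minpoly (F := F) x
  rw [e.toLinearEquiv.finrank_eq, finrank_quotient_span_eq_natDegree]

theorem minpoly_mulLeft (x : A) : minpoly F (LinearMap.mulLeft F x) = minpoly F x :=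
  minpoly.algHom_eq (Algebra.lmul F A) Algebra.lmul_injective x

theorem natDegree_le_finrank_adjoin_singleton [Module.Finite F A] {x : A} {p : F[X]}
    (hp : p.Separable) (h : p ∣ (LinearMap.mulLeft F x).charpoly) :
    p.natDegree ≤ Module.finrank F (Algebra.adjoin F {x}) := by
  rw [finrank_adjoin_singleton_eq_natDegree_minpoly]
  refine natDegree_le_of_dvd ?_ (minpoly.ne_zero (Algebra.IsIntegral.isIntegral x))
  exact minpoly_mulLeft (F := F) x ▸ dvd_minpoly_of_separable_of_dvd_charpoly hp h

theorem minpoly_eq_of_separable_of_dvd_charpoly_mulLeft [Module.Finite F A] {x : A} {p : F[X]}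
    (hmonic : p.Monic) (hp : p.Separable) (h : p ∣ (LinearMap.mulLeft F x).charpoly)
    (hle : Module.finrank F (Algebra.adjoin F {x}) ≤ p.natDegree) : minpoly F x = p :=
  eq_of_monic_of_dvd_of_natDegree_le hmonic (minpoly.monic (Algebra.IsIntegral.isIntegral x))
    (minpoly_mulLeft (F := F) x ▸ dvd_minpoly_of_separable_of_dvd_charpoly hp h)
    (finrank_adjoin_singleton_eq_natDegree_minpoly (F := F) x ▸ hle)

end Minpoly

section QuadraticEtale

theorem discrim_ne_zero_of_separable {F : Type*} [Field F] {a b : F}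
    (hsep : (X ^ 2 + C a * X + C b : F[X]).Separable) : a ^ 2 - 4 * b ≠ 0 := by
  intro hdisc
  have hdeg : (X ^ 2 + C a * X + C b : F[X]).natDegree = 2 := by compute_degree!
  have hsq : derivative (X ^ 2 + C a * X + C b) ^ 2 = 4 * (X ^ 2 + C a * X + C b) := by
    have h4 : (C a ^ 2 - 4 * C b : F[X]) = 0 := by
      rw [show (4 : F[X]) = C 4 from rfl, ← C_pow, ← C_mul, ← C_sub, hdisc, C_0]
    simp only [derivative_add, derivative_X_sq, derivative_C_mul, derivative_X, derivative_C,
      mul_one, add_zero, C_ofNat]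
    linear_combination h4
  have hcop : IsCoprime (X ^ 2 + C a * X + C b) (4 * (X ^ 2 + C a * X + C b)) :=
    hsq ▸ IsCoprime.pow_right hsep
  have hunit := hcop.isUnit_of_dvd' dvd_rfl (dvd_mul_left _ 4)
  exact two_ne_zero (hdeg.symm.trans (natDegree_eq_zero_of_isUnit hunit))

variable {F R : Type*} [Field F] [Ring R] [Algebra F R] {ζ : R}

theorem linearIndependent_one_generator (hR : Module.finrank F R = 2)
    (hζ : Algebra.adjoin F {ζ} = ⊤) : LinearIndependent F ![1, ζ] := by
  have := Module.nontrivial_of_finrank_eq_succ hR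
  refine (LinearIndependent.pair_iff' one_ne_zero).mpr fun a ha ↦ ?_
  have hbot : (⊤ : Subalgebra F R) = ⊥ := by
    rw [← hζ, eq_bot_iff, Algebra.adjoin_le_iff, Set.singleton_subset_iff, SetLike.mem_coe, ← ha]
    exact Subalgebra.smul_mem _ (one_mem _) a
  have := Subalgebra.finrank_bot (F := F) (E := R)
  rw [← hbot, subalgebra_top_finrank_eq_submodule_top_finrank, finrank_top, hR] at this
  exact absurd this (by norm_num)

theorem exists_eq_smul_one_add_smul_generator (hR : Module.finrank F R = 2)
    (hζ : Algebra.adjoin F {ζ} = ⊤) (x : R) : ∃ c d : F, x = c • 1 + d • ζ := by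
  have := Module.finite_of_finrank_eq_succ hR
  have hspan :=
    (linearIndependent_one_generator hR hζ).span_eq_top_of_card_eq_finrank' (by simp [hR])
  rw [Matrix.range_cons_cons_empty] at hspan
  obtain ⟨c, d, h⟩ := Submodule.mem_span_pair.mp (hspan ▸ Submodule.mem_top : x ∈ _)
  exact ⟨c, d, h.symm⟩

theorem exists_mul_self_eq_of_separable {p : F[X]} (hp : p.Monic) (hsep : p.Separable)
    (hdeg : p.natDegree = 2) (hpζ : aeval ζ p = 0) :
    ∃ t m : F, t ^ 2 - 4 * m ≠ 0 ∧ ζ * ζ = t • ζ - m • 1 := by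
  obtain ⟨a, b, rfl⟩ : ∃ a b : F, p = X ^ 2 + C a * X + C b := by
    refine ⟨p.coeff 1, p.coeff 0, ?_⟩
    conv_lhs => rw [eq_quadratic_of_degree_le_two (natDegree_le_iff_degree_le.mp hdeg.le),
      ← hdeg, hp.coeff_natDegree, hdeg, C_1, one_mul]
  refine ⟨-a, b, by simpa using discrim_ne_zero_of_separable hsep, ?_⟩
  have : ζ * ζ + a • ζ + b • 1 = 0 := by
    simpa [Algebra.smul_def, sq] using hpζ
  rw [← sub_eq_zero, ← this]
  module

-- `h₀` and `h₁` compare the coefficients of `1` and `ζ` in `(c + dζ)² = t(c + dζ) - m`.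
theorem conjugate_coeff_eq {t m c d : F} (hdisc : t ^ 2 - 4 * m ≠ 0) (hd : d ≠ 0)
    (hne : c ≠ 0 ∨ d ≠ 1) (h₀ : c ^ 2 - m * d ^ 2 = t * c - m)
    (h₁ : 2 * c * d + t * d ^ 2 = t * d) : c = t ∧ d = -1 := by
  have h₁' : 2 * c + t * d = t := mul_right_cancel₀ hd (by linear_combination h₁)
  have hd2 : (t ^ 2 - 4 * m) * (d ^ 2 - 1) = 0 := by
    linear_combination 4 * h₀ - (2 * c - t - t * d) * h₁'
  have hd1 : d ^ 2 = 1 := sub_eq_zero.mp ((mul_eq_zero.mp hd2).resolve_left hdisc)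
  grind

theorem algEquiv_apply_generator_eq (hR : Module.finrank F R = 2)
    (hζ : Algebra.adjoin F {ζ} = ⊤) {t m : F} (hdisc : t ^ 2 - 4 * m ≠ 0)
    (hζ2 : ζ * ζ = t • ζ - m • 1) {σ : R ≃ₐ[F] R} (hσ : σ ≠ AlgEquiv.refl) :
    σ ζ = t • 1 - ζ := by
  have hind := linearIndependent_one_generator hR hζ
  rw [LinearIndependent.pair_iff] at hind
  obtain ⟨c, d, hcd⟩ := exists_eq_smul_one_add_smul_generator hR hζ (σ ζ)
  have hd : d ≠ 0 := by
    rintro rfl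
    have : ζ = c • 1 := σ.injective (by simp [hcd])
    exact one_ne_zero (hind (-c) 1 (by rw [this]; module)).2
  have hne : c ≠ 0 ∨ d ≠ 1 := by
    by_contra! h
    refine hσ (AlgEquiv.coe_toAlgHom_injective (AlgHom.ext_of_adjoin_eq_top hζ ?_))
    simp [hcd, h]
  have hmul : (c ^ 2 - m * d ^ 2 - (t * c - m)) • (1 : R) +
      (2 * c * d + t * d ^ 2 - t * d) • ζ = 0 := by
    have hσζ2 : σ ζ * σ ζ = t • σ ζ - m • 1 := by
      rw [← map_mul, hζ2, map_sub, map_smul, map_smul, map_one]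
    rw [← sub_eq_zero, hcd] at hσζ2
    simp only [add_mul, mul_add, smul_mul_smul_comm, hζ2, mul_one, one_mul] at hσζ2
    rw [← hσζ2]
    module
  obtain ⟨h₀, h₁⟩ := hind _ _ hmul
  obtain ⟨rfl, rfl⟩ := conjugate_coeff_eq hdisc hd hne (sub_eq_zero.mp h₀) (sub_eq_zero.mp h₁)
  rw [hcd]
  module

theorem exists_generator_isUnit_sub_apply_apply_eq (hR : Module.finrank F R = 2)
    (h : ∃ ζ : R, Algebra.adjoin F {ζ} = ⊤ ∧
      ∃ p : F[X], p.Monic ∧ p.Separable ∧ p.natDegree = 2 ∧ aeval ζ p = 0)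
    {σ : R ≃ₐ[F] R} (hσ : σ ≠ AlgEquiv.refl) :
    ∃ ζ : R, Algebra.adjoin F {ζ} = ⊤ ∧ IsUnit (σ ζ - ζ) ∧ σ (σ ζ) = ζ := by
  obtain ⟨ζ, hζ, p, hp, hsep, hdeg, hpζ⟩ := h
  obtain ⟨t, m, hdisc, hζ2⟩ := exists_mul_self_eq_of_separable hp hsep hdeg hpζ
  have hσζ := algEquiv_apply_generator_eq hR hζ hdisc hζ2 hσ
  refine ⟨ζ, hζ, ?_, by simp [hσζ]⟩
  have hsq : (σ ζ - ζ) ^ 2 = algebraMap F R (t ^ 2 - 4 * m) := by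
    rw [hσζ, sq, Algebra.algebraMap_eq_smul_one]
    simp only [sub_mul, mul_sub, smul_mul_assoc, mul_smul_comm, mul_one, one_mul, hζ2]
    module
  rw [← isUnit_pow_iff two_ne_zero, hsq]
  exact hdisc.isUnit.map _

end QuadraticEtale

section Subalgebras

variable {R A : Type*} [CommRing R] [Ring A] [Algebra R A] {S T : Subalgebra R A}

theorem exists_injective_algHom_tensorProduct (hST : S.LinearDisjoint T)
    (hcomm : ∀ a ∈ S, ∀ x ∈ T, a * x = x * a) : ∃ φ : S ⊗[R] T →ₐ[R] A,
      Function.Injective φ ∧ ∀ (a : S) (x : T), φ (a ⊗ₜ x) = (a : A) * (x : A) := by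
  have hc (a : S) (x : T) : Commute (S.val a) (T.val x) := hcomm a a.2 x x.2
  let φ := Algebra.TensorProduct.lift S.val T.val hc
  have φ_tmul (a : S) (x : T) : φ (a ⊗ₜ x) = (a : A) * (x : A) :=
    Algebra.TensorProduct.lift_tmul _ _ hc a x
  have hφ : φ.toLinearMap = (Subalgebra.toSubmodule S).mulMap (Subalgebra.toSubmodule T) :=
    TensorProduct.ext' φ_tmul
  have hinj : Function.Injective φ.toLinearMap := by
    rw [hφ]
    exact hST.injective
  exact ⟨φ, hinj, φ_tmul⟩

theorem eq_adjoin_coe_generator {ζ : S} (hζ : Algebra.adjoin R {ζ} = ⊤) :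
    S = Algebra.adjoin R {(ζ : A)} :=
  calc S = (Algebra.adjoin R {ζ}).map S.val := by rw [hζ, Algebra.map_top, S.range_val]
    _ = Algebra.adjoin R {(ζ : A)} := S.val.map_adjoin_singleton ζ

theorem adjoin_union_singleton_eq_adjoin_pair {ζ : S} (hζ : Algebra.adjoin R {ζ} = ⊤) (z : A) :
    Algebra.adjoin R ((S : Set A) ∪ {z}) = Algebra.adjoin R {(ζ : A), z} := by
  rw [← Set.singleton_union, Algebra.adjoin_union, Algebra.adjoin_union, Algebra.adjoin_eq,
    ← eq_adjoin_coe_generator hζ]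

theorem centralizer_adjoin (s : Set A) :
    Subalgebra.centralizer R (Algebra.adjoin R s : Set A) = Subalgebra.centralizer R s :=
  (Subalgebra.centralizer_le R _ _ Algebra.subset_adjoin).antisymm fun _ hx _ hy ↦
    (Algebra.adjoin_le_centralizer_centralizer R s hy _ hx).symm

end Subalgebras

section FiniteDimensional

variable {F A : Type*} [Field F] [Ring A] [Algebra F A] {S T : Subalgebra F A}

theorem finrank_span_mul_of_linearDisjoint (hST : S.LinearDisjoint T) :
    Module.finrank F (Submodule.span F {t : A | ∃ a ∈ S, ∃ x ∈ T, t = a * x}) =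
      Module.finrank F S * Module.finrank F T := by
  have hspan : Submodule.span F {t : A | ∃ a ∈ S, ∃ x ∈ T, t = a * x} =
      Subalgebra.toSubmodule S * Subalgebra.toSubmodule T := by
    rw [Submodule.mul_eq_span_mul_set]
    congr! 1
    ext t
    simp [Set.mem_mul, eq_comm]
  rw [hspan, ← (Submodule.LinearDisjoint.mulMap hST).finrank_eq]
  exact Module.finrank_tensorProduct

theorem mem_of_mul_eq_one [Module.Finite F S] {x r : A} (hr : r ∈ S) (h : x * r = 1) : x ∈ S := by
  have hinj : Function.Injective (LinearMap.mulLeft F (⟨r, hr⟩ : S)) := by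
    refine LinearMap.ker_eq_bot.mp (LinearMap.ker_eq_bot'.mpr fun s (hs : ⟨r, hr⟩ * s = 0) ↦ ?_)
    have hrs : r * (s : A) = 0 := congr(Subtype.val $hs)
    exact Subtype.ext (by rw [← one_mul (s : A), ← h, mul_assoc, hrs, mul_zero, S.coe_zero])
  obtain ⟨s, hs⟩ := LinearMap.surjective_of_injective hinj 1
  have hrs : r * (s : A) = 1 := congr(Subtype.val $hs)
  exact left_inv_eq_right_inv h hrs ▸ s.2

end FiniteDimensional

section QuadraticSubalgebra

section CommRing

variable {R A : Type*} [CommRing R] [Ring A] [Algebra R A] {ζ z : A}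

theorem commute_of_mem_adjoin_mul_self {x : A} (hx : x ∈ Algebra.adjoin R {z * z}) :
    Commute x z :=
  (Algebra.commute_of_mem_adjoin_singleton_of_commute hx
    ((Commute.refl z).mul_right (Commute.refl z))).symm

theorem commute_generator_of_mem_adjoin_mul_self (hζ : Commute ζ (z * z)) {x : A}
    (hx : x ∈ Algebra.adjoin R {z * z}) : Commute x ζ :=
  (Algebra.commute_of_mem_adjoin_singleton_of_commute hx hζ).symm

theorem commute_of_mem_of_mem_adjoin_mul_self {S : Subalgebra R A} {ζ : S}
    (hζ : Algebra.adjoin R {ζ} = ⊤) (hζz : Commute (ζ : A) (z * z)) :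
    ∀ a ∈ S, ∀ x ∈ Algebra.adjoin R {z * z}, a * x = x * a := by
  intro a ha x hx
  rw [eq_adjoin_coe_generator hζ] at ha
  exact (Algebra.commute_of_mem_adjoin_singleton_of_commute ha
    (commute_generator_of_mem_adjoin_mul_self hζz hx)).symm.eq

theorem linearIndependent_adjoin_mul_self (hκ : IsUnit (ζ * z - z * ζ))
    (hζ : Commute ζ (z * z)) :
    LinearIndependent (Algebra.adjoin R {z * z}) ![1, ζ, z, ζ * z] := by
  rw [Fintype.linearIndependent_iff]
  intro c (hc : ∑ i, (c i : A) * ![1, ζ, z, ζ * z] i = 0)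
  have hc0 := eq_zero_of_commute_sum_mul hκ
    (fun i ↦ commute_generator_of_mem_adjoin_mul_self hζ (c i).2)
    (fun i ↦ commute_of_mem_adjoin_mul_self (c i).2) (hc ▸ Commute.zero_left ζ)
    (hc ▸ Commute.zero_left z)
  intro i
  by_cases hi : i = 0
  · rw [Fintype.sum_eq_single 0 fun j hj ↦ by rw [hc0 j hj, zero_mul]] at hc
    simpa [hi] using hc
  · exact Subtype.ext (hc0 i hi)

theorem adjoin_pair_le_centralizer_mul_self (hζ : Commute ζ (z * z)) :
    Algebra.adjoin R {ζ, z} ≤ Subalgebra.centralizer R {z * z} := by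
  rw [Algebra.adjoin_le_iff, Set.pair_subset_iff]
  constructor <;> rintro _ rfl
  exacts [hζ.eq.symm, mul_assoc z z z]

theorem mem_adjoin_pair_of_mem_span {x : A}
    (hx : x ∈ Submodule.span (Algebra.adjoin R {z * z}) (Set.range ![1, ζ, z, ζ * z])) :
    x ∈ Algebra.adjoin R {ζ, z} := by
  have hζ : ζ ∈ Algebra.adjoin R {ζ, z} := Algebra.subset_adjoin (by simp)
  have hz : z ∈ Algebra.adjoin R {ζ, z} := Algebra.subset_adjoin (by simp)
  have hle : Algebra.adjoin R {z * z} ≤ Algebra.adjoin R {ζ, z} :=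
    Algebra.adjoin_singleton_le (mul_mem hz hz)
  obtain ⟨c, rfl⟩ := Submodule.mem_span_range_iff_exists_fun _ |>.mp hx
  refine sum_mem fun i _ ↦ mul_mem (hle (c i).2) ?_
  fin_cases i
  exacts [one_mem _, hζ, hz, mul_mem hζ hz]

end CommRing

variable {F D : Type*} [Field F] [Ring D] [Algebra F D] [Module.Finite F D] {ζ z : D}

theorem two_mul_finrank_adjoin_mul_self_le (hκ : IsUnit (ζ * z - z * ζ))
    (hζ : Commute ζ (z * z)) :
    2 * Module.finrank F (Algebra.adjoin F {z * z}) ≤ Module.finrank F (Algebra.adjoin F {z}) := by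
  let L := Subalgebra.toSubmodule (Algebra.adjoin F {z * z})
  let φ : L × L →ₗ[F] D := L.subtype.coprod (LinearMap.mulRight F z ∘ₗ L.subtype)
  have hφ : Function.Injective φ := by
    refine LinearMap.ker_eq_bot.mp (LinearMap.ker_eq_bot'.mpr ?_)
    rintro ⟨⟨x, hx⟩, y, hy⟩ (h : x + y * z = 0)
    have hy0 := right_eq_zero_of_commute_add_mul hκ
      (commute_generator_of_mem_adjoin_mul_self hζ hx)
      (commute_generator_of_mem_adjoin_mul_self hζ hy) (h ▸ Commute.zero_left ζ)
    simp_all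
  have hmem (p : L × L) : φ p ∈ Subalgebra.toSubmodule (Algebra.adjoin F {z}) := by
    have hz : z ∈ Algebra.adjoin F {z} := Algebra.self_mem_adjoin_singleton F z
    have hle : Algebra.adjoin F {z * z} ≤ Algebra.adjoin F {z} :=
      Algebra.adjoin_singleton_le (mul_mem hz hz)
    exact add_mem (hle p.1.2) (Subalgebra.mul_mem _ (hle p.2.2) hz)
  calc 2 * Module.finrank F L = Module.finrank F (L × L) := by rw [Module.finrank_prod, two_mul]
    _ ≤ _ := LinearMap.finrank_le_finrank_of_injective (f := φ.codRestrict _ hmem)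
      fun _ _ h ↦ hφ congr(Subtype.val $h)

theorem finrank_centralizer_mul_self_le (hκ : IsUnit (ζ * z - z * ζ)) (hζ : Commute ζ (z * z)) :
    Module.finrank F (Subalgebra.centralizer F {z * z}) ≤
      2 * Module.finrank F (Subalgebra.centralizer F {z}) := by
  let τ : D →ₗ[F] D := LinearMap.mulLeft F z + LinearMap.mulRight F z
  have hτ {c : D} (hc : Commute c (z * z)) :
      τ c ∈ Subalgebra.toSubmodule (Subalgebra.centralizer F {z}) := by
    rintro _ rfl
    exact (commute_mul_add_mul hc).symm
  have hC (c : Subalgebra.centralizer F {z * z}) : Commute (c : D) (z * z) := (c.2 _ rfl).symm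
  let ι := (Subalgebra.centralizer F {z * z}).val.toLinearMap
  let φ := ((τ ∘ₗ ι).codRestrict _ fun c ↦ hτ (hC c)).prod
    ((τ ∘ₗ LinearMap.mulLeft F ζ ∘ₗ ι).codRestrict _ fun c ↦ hτ (hζ.mul_left (hC c)))
  have hφ : Function.Injective φ := by
    refine LinearMap.ker_eq_bot.mp (LinearMap.ker_eq_bot'.mpr fun c hc ↦ ?_)
    have h₁ : z * c + c * z = 0 := congr(($hc).1)
    have h₂ : z * (ζ * c) + ζ * c * z = 0 := congr(($hc).2)
    refine Subtype.ext (hκ.mul_right_eq_zero.mp ?_)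
    rw [commutator_mul_eq, h₁, h₂, mul_zero, sub_zero]
  simpa [two_mul] using LinearMap.finrank_le_finrank_of_injective hφ

theorem finrank_span_adjoin_mul_self (hκ : IsUnit (ζ * z - z * ζ))
    (hζ : Commute ζ (z * z)) :
    Module.finrank F
        (Submodule.span (Algebra.adjoin F {z * z}) (Set.range ![1, ζ, z, ζ * z])) =
      4 * Module.finrank F (Algebra.adjoin F {z * z}) := by
  let b := Module.Basis.span (linearIndependent_adjoin_mul_self (R := F) hκ hζ)
  simp [(b.equivFun.restrictScalars F).finrank_eq, Module.finrank_pi_fintype]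

section FourDimensional

variable [Algebra.IsCentral F D] [IsSimpleRing D] {n : ℕ}

theorem finrank_adjoin_mul_self_eq (hD : Module.finrank F D = (2 * n) ^ 2)
    (hκ : IsUnit (ζ * z - z * ζ)) (hζ : Commute ζ (z * z))
    (hL : n ≤ Module.finrank F (Algebra.adjoin F {z * z})) :
    Module.finrank F (Algebra.adjoin F {z * z}) = n := by
  have := two_mul_finrank_adjoin_mul_self_le (F := F) hκ hζ
  have := finrank_adjoin_singleton_le_of_finrank_eq_sq hD z
  lia

theorem finrank_centralizer_mul_self_le_four_mul (hD : Module.finrank F D = (2 * n) ^ 2)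
    (hκ : IsUnit (ζ * z - z * ζ)) (hζ : Commute ζ (z * z))
    (hL : Module.finrank F (Algebra.adjoin F {z * z}) = n) :
    Module.finrank F (Subalgebra.centralizer F {z * z}) ≤ 4 * n := by
  have hz : Module.finrank F (Algebra.adjoin F {z}) = 2 * n :=
    le_antisymm (finrank_adjoin_singleton_le_of_finrank_eq_sq hD z)
      (hL ▸ two_mul_finrank_adjoin_mul_self_le hκ hζ)
  have := finrank_centralizer_mul_self_le (F := F) hκ hζ
  rw [centralizer_singleton_eq_adjoin_of_finrank_eq_sq hD hz, hz] at this
  lia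

theorem restrictScalars_span_eq_centralizer_mul_self (hD : Module.finrank F D = (2 * n) ^ 2)
    (hκ : IsUnit (ζ * z - z * ζ)) (hζ : Commute ζ (z * z))
    (hL : Module.finrank F (Algebra.adjoin F {z * z}) = n) :
    (Submodule.span (Algebra.adjoin F {z * z}) (Set.range ![1, ζ, z, ζ * z])).restrictScalars F =
      Subalgebra.toSubmodule (Subalgebra.centralizer F {z * z}) :=
  Submodule.eq_of_le_of_finrank_le
    (fun _ hx ↦ adjoin_pair_le_centralizer_mul_self hζ (mem_adjoin_pair_of_mem_span hx)) <|
    (finrank_centralizer_mul_self_le_four_mul hD hκ hζ hL).trans_eq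
      (hL ▸ (finrank_span_adjoin_mul_self hκ hζ).symm)

theorem mem_span_of_mem_centralizer_mul_self (hD : Module.finrank F D = (2 * n) ^ 2)
    (hκ : IsUnit (ζ * z - z * ζ)) (hζ : Commute ζ (z * z))
    (hL : Module.finrank F (Algebra.adjoin F {z * z}) = n) {x : D}
    (hx : x ∈ Subalgebra.centralizer F {z * z}) :
    x ∈ Submodule.span (Algebra.adjoin F {z * z}) (Set.range ![1, ζ, z, ζ * z]) :=
  (restrictScalars_span_eq_centralizer_mul_self hD hκ hζ hL).ge hx

theorem finrank_centralizer_mul_self (hD : Module.finrank F D = (2 * n) ^ 2)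
    (hκ : IsUnit (ζ * z - z * ζ)) (hζ : Commute ζ (z * z))
    (hL : Module.finrank F (Algebra.adjoin F {z * z}) = n) :
    Module.finrank F (Subalgebra.centralizer F {z * z}) = 4 * n := by
  rw [← hL, ← finrank_span_adjoin_mul_self hκ hζ]
  exact congr(Module.finrank F
    $(restrictScalars_span_eq_centralizer_mul_self hD hκ hζ hL)).symm

theorem adjoin_pair_eq_centralizer_mul_self (hD : Module.finrank F D = (2 * n) ^ 2)
    (hκ : IsUnit (ζ * z - z * ζ)) (hζ : Commute ζ (z * z))
    (hL : Module.finrank F (Algebra.adjoin F {z * z}) = n) :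
    Algebra.adjoin F {ζ, z} = Subalgebra.centralizer F {z * z} :=
  (adjoin_pair_le_centralizer_mul_self hζ).antisymm fun _ hx ↦
    mem_adjoin_pair_of_mem_span (mem_span_of_mem_centralizer_mul_self hD hκ hζ hL hx)

theorem existsUnique_eq_sum_mul_of_mem_centralizer_mul_self
    (hD : Module.finrank F D = (2 * n) ^ 2) (hκ : IsUnit (ζ * z - z * ζ))
    (hζ : Commute ζ (z * z)) (hL : Module.finrank F (Algebra.adjoin F {z * z}) = n) {x : D}
    (hx : x ∈ Subalgebra.centralizer F {z * z}) :
    ∃! c : Fin 4 → Algebra.adjoin F {z * z}, x = ∑ i, (c i : D) * ![1, ζ, z, ζ * z] i := by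
  obtain ⟨c, hc⟩ := Submodule.mem_span_range_iff_exists_fun _ |>.mp
    (mem_span_of_mem_centralizer_mul_self hD hκ hζ hL hx)
  exact ⟨c, hc.symm, fun c' hc' ↦
    (linearIndependent_adjoin_mul_self hκ hζ).fintypeLinearCombination_injective
      (hc'.symm.trans hc.symm)⟩

theorem exists_basis_centralizer_mul_self (hD : Module.finrank F D = (2 * n) ^ 2)
    (hκ : IsUnit (ζ * z - z * ζ)) (hζ : Commute ζ (z * z))
    (hL : Module.finrank F (Algebra.adjoin F {z * z}) = n) :
    ∃ b : Fin 4 → D, (∀ i, b i ∈ Subalgebra.centralizer F {z * z}) ∧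
      ∀ x ∈ Subalgebra.centralizer F {z * z},
        ∃! c : Fin 4 → Algebra.adjoin F {z * z}, x = ∑ i, (c i : D) * b i :=
  ⟨![1, ζ, z, ζ * z], fun i ↦ adjoin_pair_le_centralizer_mul_self hζ
      (mem_adjoin_pair_of_mem_span (Submodule.subset_span ⟨i, rfl⟩)),
    fun _ ↦ existsUnique_eq_sum_mul_of_mem_centralizer_mul_self hD hκ hζ hL⟩

theorem mem_adjoin_mul_self_iff_forall_commute (hD : Module.finrank F D = (2 * n) ^ 2)
    (hκ : IsUnit (ζ * z - z * ζ)) (hζ : Commute ζ (z * z))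
    (hL : Module.finrank F (Algebra.adjoin F {z * z}) = n) {x : D}
    (hx : x ∈ Subalgebra.centralizer F {z * z}) :
    (∀ y ∈ Subalgebra.centralizer F {z * z}, x * y = y * x) ↔
      x ∈ Algebra.adjoin F {z * z} := by
  constructor
  · intro h
    have hζC : ζ ∈ Subalgebra.centralizer F {z * z} := by rintro _ rfl; exact hζ.eq.symm
    have hzC : z ∈ Subalgebra.centralizer F {z * z} := by rintro _ rfl; exact mul_assoc z z z
    obtain ⟨c, rfl, -⟩ := existsUnique_eq_sum_mul_of_mem_centralizer_mul_self hD hκ hζ hL hx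
    have hc0 := eq_zero_of_commute_sum_mul hκ
      (fun i ↦ commute_generator_of_mem_adjoin_mul_self hζ (c i).2)
      (fun i ↦ commute_of_mem_adjoin_mul_self (c i).2) (h ζ hζC) (h z hzC)
    rw [Fintype.sum_eq_single 0 fun i hi ↦ by rw [hc0 i hi, zero_mul]]
    simp
  · exact fun h y hy ↦
      (Algebra.commute_of_mem_adjoin_singleton_of_commute h (hy _ rfl).symm).eq.symm

end FourDimensional

end QuadraticSubalgebra

section Conjugation

theorem isUnit_right_of_isUnit_mul {M : Type*} [Monoid M] {u z : M} (hu : IsUnit u)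
    (h : IsUnit (u * z)) : IsUnit z := by
  obtain ⟨u, rfl⟩ := hu
  exact (u.isUnit_units_mul z).mp h

theorem mul_eq_mul_of_isUnit_mul {M : Type*} [Monoid M] {a b u z : M} (hu : IsUnit u)
    (hau : a * u = u * a) (h : a * (u * z) = u * z * b) : a * z = z * b :=
  hu.mul_left_cancel (by rw [← mul_assoc, ← hau, mul_assoc, h, mul_assoc])

theorem commute_of_isUnit_mul_eq {M : Type*} [Monoid M] {a t u w : M} (hu : IsUnit u)
    (ht : u * t = a * u) (haw : Commute a w) (huw : Commute u w) : Commute t w :=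
  hu.mul_left_cancel <|
    calc u * (t * w) = a * u * w := by rw [← mul_assoc, ht]
      _ = w * (a * u) := (haw.mul_left huw).eq
      _ = u * (w * t) := by rw [← ht, ← mul_assoc, ← huw.eq, mul_assoc]

theorem commute_mul_self_of_mul_eq {M : Type*} [Monoid M] {a b z : M} (hab : a * z = z * b)
    (hba : b * z = z * a) : Commute a (z * z) :=
  calc a * (z * z) = z * (b * z) := by rw [← mul_assoc, hab, mul_assoc]
    _ = z * z * a := by rw [hba, mul_assoc]

variable {F D : Type*} [Field F] [Ring D] [Algebra F D] {S : Subalgebra F D} {z : D}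

theorem isUnit_commutator {ζ ζ' : D} (hz : IsUnit z) (hζ' : IsUnit (ζ' - ζ))
    (h : ζ * z = z * ζ') : IsUnit (ζ * z - z * ζ) := by
  rw [h, ← mul_sub]
  exact hz.mul hζ'

theorem mem_of_one_add_mul_eq [Module.Finite F D] {B : Subalgebra F D} (hSB : S ≤ B) {ζ ζ' : S}
    (hu : IsUnit (ζ' - ζ)) (hz : ζ * z = z * ζ') {t : D} (ht : t ∈ B)
    (h : (1 + z) * t = ζ * (1 + z)) : z ∈ B := by
  obtain ⟨v, hv⟩ := hu.exists_right_inv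
  have hv' : ((ζ' : D) - ζ) * v = 1 := congr(Subtype.val $hv)
  have key : (1 + z) * (ζ' - t) = ζ' - ζ := by
    rw [mul_sub, h, add_mul, mul_add, hz, one_mul, mul_one]
    abel
  have hmem : ((ζ' : D) - t) * v ∈ B := mul_mem (sub_mem (hSB ζ'.2) ht) (hSB v.2)
  have h1z : 1 + z ∈ B := mem_of_mul_eq_one hmem (by rw [← mul_assoc, key, hv'])
  simpa using sub_mem h1z (one_mem B)

theorem adjoin_union_conj_eq_centralizer_mul_self [Module.Finite F D] {ζ ζ' : S}
    (hu : IsUnit (ζ' - ζ)) (hz : ζ * z = z * ζ') {u g : D} (hg : IsUnit g) (hguz : g = u * (1 + z))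
    (hunit : IsUnit u) (hcomm : ∀ a ∈ S, a * u = u * a)
    (hC : Algebra.adjoin F ((S : Set D) ∪ {z}) = Subalgebra.centralizer F {z * z}) :
    Algebra.adjoin F ((S : Set D) ∪ {t | ∃ a ∈ S, t = ↑hg.unit⁻¹ * a * g}) =
      Subalgebra.centralizer F {z * z} := by
  have h1z : IsUnit (1 + z) := isUnit_right_of_isUnit_mul hunit (hguz ▸ hg)
  have conj_eq {a : D} (ha : a ∈ S) : (1 + z) * (↑hg.unit⁻¹ * a * g) = a * (1 + z) := by
    refine hunit.mul_left_cancel ?_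
    rw [← mul_assoc, ← hguz, ← mul_assoc, ← mul_assoc, hg.mul_val_inv, one_mul, hguz,
      ← mul_assoc, hcomm a ha, mul_assoc]
  have hSC : (S : Set D) ⊆ Subalgebra.centralizer F {z * z} := fun a ha ↦
    hC ▸ Algebra.subset_adjoin (.inl ha)
  refine le_antisymm (Algebra.adjoin_le (Set.union_subset hSC ?_)) ?_
  · rintro _ ⟨a, ha, rfl⟩ _ rfl
    have haz : Commute a (z * z) := (hSC ha _ rfl).symm
    have h1zz : Commute (1 + z) (z * z) := (Commute.one_left _).add_left (.mul_right rfl rfl)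
    exact (commute_of_isUnit_mul_eq h1z (conj_eq ha) haz h1zz).symm
  · rw [← hC, Algebra.adjoin_le_iff, Set.union_subset_iff, Set.singleton_subset_iff]
    have hS := Set.subset_union_left.trans (Algebra.subset_adjoin (R := F)
      (s := (S : Set D) ∪ {t | ∃ a ∈ S, t = ↑hg.unit⁻¹ * a * g}))
    exact ⟨hS, mem_of_one_add_mul_eq hS hu hz
      (Algebra.subset_adjoin (.inr ⟨ζ, ζ.2, rfl⟩)) (conj_eq ζ.2)⟩

end Conjugation

section EtaleQuadraticSubalgebra

variable {F D : Type*} [Field F] [Ring D] [Algebra F D] {E : Subalgebra F D} {ζ : E} {z : D}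

theorem linearDisjoint_adjoin_mul_self (hE : Module.finrank F E = 2)
    (hζ : Algebra.adjoin F {ζ} = ⊤) (hκ : IsUnit (ζ * z - z * ζ)) (hζz : Commute (ζ : D) (z * z)) :
    E.LinearDisjoint (Algebra.adjoin F {z * z}) := by
  let b := basisOfLinearIndependentOfCardEqFinrank (linearIndependent_one_generator hE hζ)
    (by simp [hE])
  refine Subalgebra.LinearDisjoint.of_basis_left_of_commute _ _ b ?_ fun a x ↦
    commute_of_mem_of_mem_adjoin_mul_self hζ hζz a a.2 x x.2
  have hind := (linearIndependent_adjoin_mul_self (R := F) hκ hζz).comp _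
    (Fin.castLE_injective (show 2 ≤ 4 by norm_num))
  convert hind using 1
  ext i
  fin_cases i <;> simp [b]

theorem adjoin_union_singleton_eq_centralizer_mul_self [Algebra.IsCentral F D] [IsSimpleRing D]
    [Module.Finite F D] {n : ℕ} (hD : Module.finrank F D = (2 * n) ^ 2)
    (hζ : Algebra.adjoin F {ζ} = ⊤) (hκ : IsUnit (ζ * z - z * ζ)) (hζz : Commute (ζ : D) (z * z))
    (hL : Module.finrank F (Algebra.adjoin F {z * z}) = n) :
    Algebra.adjoin F ((E : Set D) ∪ {z}) = Subalgebra.centralizer F {z * z} :=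
  (adjoin_union_singleton_eq_adjoin_pair hζ z).trans
    (adjoin_pair_eq_centralizer_mul_self hD hκ hζz hL)

end EtaleQuadraticSubalgebra

/-- **Proposition 2.6.** Let `F` be a field, `n ≥ 1`, `D` a central simple `F`-algebra of
dimension `4n²`, `E ⊆ D` a commutative quadratic étale `F`-subalgebra (étale expressed by the
existence of a generator with a monic separable minimal polynomial of degree 2) with nontrivial
`F`-automorphism `σ`, such that `D` is free as a left `E`-module.  Given `g = g₊ + g₋` with
`g₊ ∈ D₊`, `g₋ ∈ D₋` all invertible, `z = g₊⁻¹ g₋`, and a monic separable `δ` of degree `n` with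
`δ(0), δ(1) ≠ 0` such that the characteristic polynomial of left multiplication by `z²` equals
`δ^(4n)`, then (1) `L = F[z²] ≅ F[T]/(δ)` and has dimension `n`; (2) `E` and `L` commute, the
multiplication map `E ⊗ L → D` is an injective algebra homomorphism and `E·L` has `F`-dimension
`2n`; (3) `B = F[E, g⁻¹Eg] = F[E, z]`, `dim_F B = 4n`, the center of `B` is `L`, `B` is free of
rank 4 over `L` and equals the centralizer of `L` in `D`. -/
theorem statement0
    (F : Type*) [Field F] (n : ℕ) (hn : 1 ≤ n)
    (D : Type*) [Ring D] [Algebra F D] [Module.Finite F D]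
    (hdim : Module.finrank F D = 4 * n ^ 2)
    (hcentral : ∀ d : D, (∀ x : D, d * x = x * d) → ∃ a : F, d = algebraMap F D a)
    (hsimple : IsSimpleRing D)
    (E : Subalgebra F D)
    (hEcomm : ∀ x ∈ E, ∀ y ∈ E, x * y = y * x)
    (hEdim : Module.finrank F E = 2)
    (hEetale : ∃ ζ : E, Algebra.adjoin F {ζ} = ⊤ ∧
      ∃ p : F[X], p.Monic ∧ p.Separable ∧ p.natDegree = 2 ∧ aeval ζ p = 0)
    (σ : E ≃ₐ[F] E) (hσ : σ ≠ AlgEquiv.refl)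
    (hfree : ∃ (m : ℕ) (b : Fin m → D),
      ∀ d : D, ∃! c : Fin m → E, d = ∑ i, (c i : D) * b i)
    (g gp gm : D) (hsum : g = gp + gm)
    (hgP : ∀ a : E, (a : D) * gp = gp * (a : D))
    (hgM : ∀ a : E, (a : D) * gm = gm * (σ a : D))
    (hg : IsUnit g) (hgpu : IsUnit gp) (hgmu : IsUnit gm)
    (z : D) (hz : gp * z = gm)
    (δ : F[X]) (hmonic : δ.Monic) (hsep : δ.Separable)
    (hdeg : δ.natDegree = n) (hδ0 : δ.eval 0 ≠ 0) (hδ1 : δ.eval 1 ≠ 0)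
    (hchar : (LinearMap.mulLeft F (z * z)).charpoly = δ ^ (4 * n)) :
    -- (1)  L := F[z²] is isomorphic to F[T]/(δ); in particular dim_F L = n
    (Nonempty (↥(Algebra.adjoin F {z * z}) ≃ₐ[F] (F[X] ⧸ Ideal.span {δ})) ∧
      Module.finrank F ↥(Algebra.adjoin F {z * z}) = n) ∧
    -- (2)  E commutes with L, E ⊗ L → D is an injective algebra map, dim_F (E·L) = 2n
    ((∀ a ∈ E, ∀ x ∈ Algebra.adjoin F {z * z}, a * x = x * a) ∧
      (∃ φ : (↥E ⊗[F] ↥(Algebra.adjoin F {z * z})) →ₐ[F] D,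
        Function.Injective φ ∧
        ∀ (a : E) (x : ↥(Algebra.adjoin F {z * z})), φ (a ⊗ₜ[F] x) = (a : D) * (x : D)) ∧
      Module.finrank F
        ↥(Submodule.span F {t : D | ∃ a ∈ E, ∃ x ∈ Algebra.adjoin F {z * z}, t = a * x})
        = 2 * n) ∧
    -- (3)  B := F[E, g⁻¹Eg] = F[E, z], dim_F B = 4n, Z(B) = L, B free of rank 4 over L,
    --      and B = Cent_D(L)
    (Algebra.adjoin F ((E : Set D) ∪ {t : D | ∃ a ∈ E, t = ↑hg.unit⁻¹ * (a : D) * g}) =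
        Algebra.adjoin F ((E : Set D) ∪ {z}) ∧
      Module.finrank F ↥(Algebra.adjoin F ((E : Set D) ∪ {z})) = 4 * n ∧
      (∀ x ∈ Algebra.adjoin F ((E : Set D) ∪ {z}),
        ((∀ y ∈ Algebra.adjoin F ((E : Set D) ∪ {z}), x * y = y * x) ↔
          x ∈ Algebra.adjoin F {z * z})) ∧
      (∃ b : Fin 4 → D, (∀ i, b i ∈ Algebra.adjoin F ((E : Set D) ∪ {z})) ∧
        ∀ x ∈ Algebra.adjoin F ((E : Set D) ∪ {z}),
          ∃! c : Fin 4 → ↥(Algebra.adjoin F {z * z}), x = ∑ i, (c i : D) * b i) ∧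
      Algebra.adjoin F ((E : Set D) ∪ {z}) =
        Subalgebra.centralizer F ((Algebra.adjoin F {z * z} : Subalgebra F D) : Set D)) := by
  have : Algebra.IsCentral F D :=
    ⟨fun d hd ↦ (hcentral d fun x ↦ (Subalgebra.mem_center_iff.mp hd x).symm).imp fun _ ↦ .symm⟩
  have hD : Module.finrank F D = (2 * n) ^ 2 := by rw [hdim]; ring
  obtain ⟨ζ, hζ, hu, hσσ⟩ := exists_generator_isUnit_sub_apply_apply_eq hEdim hEetale hσ
  subst hz
  have hz : IsUnit z := isUnit_right_of_isUnit_mul hgpu hgmu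
  have hEz (a : E) : (a : D) * z = z * σ a := mul_eq_mul_of_isUnit_mul hgpu (hgP a) (hgM a)
  have hκ : IsUnit (ζ * z - z * ζ) := isUnit_commutator hz (hu.map E.val) (hEz ζ)
  have hζz : Commute (ζ : D) (z * z) := commute_mul_self_of_mul_eq (hEz ζ) (by rw [hEz, hσσ])
  have hδ : δ ∣ (LinearMap.mulLeft F (z * z)).charpoly := hchar ▸ dvd_pow_self δ (by lia)
  have hL : Module.finrank F (Algebra.adjoin F {z * z}) = n := finrank_adjoin_mul_self_eq hD hκ hζz
    (hdeg ▸ natDegree_le_finrank_adjoin_singleton hsep hδ)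
  have hmin := minpoly_eq_of_separable_of_dvd_charpoly_mulLeft hmonic hsep hδ (hL.trans_le hdeg.ge)
  have hEL := commute_of_mem_of_mem_adjoin_mul_self hζ hζz
  have hdisj := linearDisjoint_adjoin_mul_self hEdim hζ hκ hζz
  have hB := adjoin_union_singleton_eq_centralizer_mul_self hD hζ hκ hζz hL
  have hBg := adjoin_union_conj_eq_centralizer_mul_self hu (hEz ζ) hg
    (hsum.trans (mul_one_add gp z).symm) hgpu (fun a ha ↦ hgP ⟨a, ha⟩) hB
  rw [hBg, hB, centralizer_adjoin, finrank_span_mul_of_linearDisjoint hdisj, hEdim, hL, ← hmin]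
  exact ⟨⟨nonempty_algEquiv_adjoin_singleton_quotient_minpoly (z * z), rfl⟩,
    ⟨hEL, exists_injective_algHom_tensorProduct hdisj hEL, rfl⟩,
    ⟨rfl, finrank_centralizer_mul_self hD hκ hζz hL,
      fun _ ↦ mem_adjoin_mul_self_iff_forall_commute hD hκ hζz hL,
      exists_basis_centralizer_mul_self hD hκ hζz hL, rfl⟩⟩
end

section
/- Let B be a commutative ring, let g ∈ B be a nonzerodivisor, and let (f₁', f₂') be a regular sequence in B. Set f₁ = g·f₁' and f₂ = g·f₂'. Then: (1) the kernel of the B-linear map B² → B, (x, y) ↦ f₁·x + f₂·y, equals the cyclic submodule B·(f₂', −f₁'), and this submodule is free of rank 1 over B; (2) the quotient of this kernel by its submodule B·(f₂, −f₁) is isomorphic to B/(g) as a B-module. -/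
/-!
The argument works with coefficients in any module `M`. A common regular factor `g` does not change
the syzygies of the pair `(a, b)`, and when `(a, b)` is a regular sequence these syzygies are the
Koszul ones, so they form a module `K` isomorphic to `M` via `m ↦ (b • m, -(a • m))`. The Koszul
syzygies of `(g * a, g * b)` are `g` times those of `(a, b)`, so the quotient in question is
`K ⧸ gK`, which is isomorphic to `M ⧸ gM`.
-/

section

open RingTheory.Sequence
open scoped Pointwise

variable {R M N : Type*} [CommRing R] [AddCommGroup M] [Module R M] [AddCommGroup N] [Module R N]

variable (M) in
/-- The Koszul differential `(x, y) ↦ a • x + b • y` of the pair `(a, b)` with coefficients in `M`,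
from degree one to degree zero. -/
def koszulD₁ (a b : R) : M × M →ₗ[R] M :=
  (LinearMap.lsmul R M a).coprod (LinearMap.lsmul R M b)

variable (M) in
/-- The Koszul differential `m ↦ (b • m, -(a • m))` of the pair `(a, b)` with coefficients in `M`,
from degree two to degree one. The sign is chosen so that at `M = R` the image of `1` is the
syzygy `(b, -a)`. -/
def koszulD₂ (a b : R) : M →ₗ[R] M × M :=
  (LinearMap.lsmul R M b).prod (-LinearMap.lsmul R M a)

@[simp]
lemma koszulD₁_apply (a b : R) (p : M × M) : koszulD₁ M a b p = a • p.1 + b • p.2 :=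
  rfl

@[simp]
lemma koszulD₂_apply (a b : R) (m : M) : koszulD₂ M a b m = (b • m, -(a • m)) :=
  rfl

lemma koszulD₁_mul_mul (g a b : R) : koszulD₁ M (g * a) (g * b) = g • koszulD₁ M a b := by
  ext <;> simp [mul_smul]

lemma koszulD₂_mul_mul (g a b : R) : koszulD₂ M (g * a) (g * b) = g • koszulD₂ M a b := by
  ext <;> simp [mul_smul]

lemma koszulD₂_injective {a : R} (ha : IsSMulRegular M a) (b : R) :
    Function.Injective (koszulD₂ M a b) := fun _ _ h ↦
  ha (neg_injective (congrArg Prod.snd h))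

lemma isWeaklyRegular_pair_iff {a b : R} :
    IsWeaklyRegular M [a, b] ↔
      IsSMulRegular M a ∧
        ∀ y : M, b • y ∈ a • (⊤ : Submodule R M) → y ∈ a • (⊤ : Submodule R M) := by
  rw [isWeaklyRegular_cons_iff, isWeaklyRegular_singleton_iff,
    isSMulRegular_quotient_iff_mem_of_smul_mem]

lemma exact_koszulD₂_koszulD₁ {a b : R} (h : IsWeaklyRegular M [a, b]) :
    Function.Exact (koszulD₂ M a b) (koszulD₁ M a b) := by
  obtain ⟨ha, hb⟩ := isWeaklyRegular_pair_iff.1 h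
  rintro ⟨x, y⟩
  constructor
  · intro (hxy : a • x + b • y = 0)
    have hby : b • y ∈ a • (⊤ : Submodule R M) :=
      eq_neg_of_add_eq_zero_right hxy ▸ neg_mem (Submodule.smul_mem_pointwise_smul x a ⊤ trivial)
    obtain ⟨c, -, rfl : a • c = y⟩ := hb y hby
    have hx : x + b • c = 0 := ha.right_eq_zero_of_smul (by rw [smul_add, smul_comm a b, hxy])
    exact ⟨-c, by simp [eq_neg_of_add_eq_zero_left hx]⟩
  · rintro ⟨m, hm⟩
    simp [← hm, smul_comm a b]

lemma ker_smul_eq_ker {g : R} (hg : IsSMulRegular M g) (f : N →ₗ[R] M) :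
    LinearMap.ker (g • f) = LinearMap.ker f := by
  ext x
  exact ⟨hg.right_eq_zero_of_smul, fun hx ↦ by simp [LinearMap.mem_ker.1 hx]⟩

lemma range_smul_eq_smul_range (g : R) (f : M →ₗ[R] N) :
    LinearMap.range (g • f) = g • LinearMap.range f := by
  ext x
  simp [Submodule.mem_smul_pointwise_iff_exists]

lemma comap_subtype_smul_self (g : R) (K : Submodule R M) :
    (g • K).comap K.subtype = g • (⊤ : Submodule R K) := by
  refine Submodule.map_injective_of_injective K.injective_subtype ?_
  rw [Submodule.map_pointwise_smul, Submodule.map_subtype_top, Submodule.map_comap_subtype,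
    inf_eq_right.2 (Submodule.smul_le_self_of_tower g K)]

theorem statement13_general {g a b : R} (hg : IsSMulRegular M g) (hab : IsWeaklyRegular M [a, b]) :
    (LinearMap.ker (koszulD₁ M (g * a) (g * b)) = LinearMap.range (koszulD₂ M a b) ∧
      Nonempty (LinearMap.range (koszulD₂ M a b) ≃ₗ[R] M)) ∧
    Nonempty
      ((LinearMap.ker (koszulD₁ M (g * a) (g * b)) ⧸
          (LinearMap.range (koszulD₂ M (g * a) (g * b))).comap
            (LinearMap.ker (koszulD₁ M (g * a) (g * b))).subtype) ≃ₗ[R]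
        (M ⧸ g • (⊤ : Submodule R M))) := by
  have hker : LinearMap.ker (koszulD₁ M (g * a) (g * b)) = LinearMap.range (koszulD₂ M a b) := by
    rw [koszulD₁_mul_mul, ker_smul_eq_ker hg, (exact_koszulD₂_koszulD₁ hab).linearMap_ker_eq]
  have e : LinearMap.range (koszulD₂ M a b) ≃ₗ[R] M :=
    (LinearEquiv.ofInjective _ (koszulD₂_injective (isWeaklyRegular_pair_iff.1 hab).1 b)).symm
  rw [hker, koszulD₂_mul_mul, range_smul_eq_smul_range, comap_subtype_smul_self]
  exact ⟨⟨rfl, ⟨e⟩⟩, ⟨QuotSMulTop.congr g e⟩⟩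

lemma smul_top_eq_span_singleton (a : R) : a • (⊤ : Ideal R) = Ideal.span {a} := by
  rw [← Submodule.ideal_span_singleton_smul, smul_eq_mul, Ideal.mul_top]

lemma range_koszulD₂_self (a b : R) :
    LinearMap.range (koszulD₂ R a b) = Submodule.span R {(b, -a)} := by
  rw [← LinearMap.range_toSpanSingleton]
  congr 1
  ext <;> simp

lemma isWeaklyRegular_self_pair_iff {a b : R} :
    IsWeaklyRegular R [a, b] ↔
      (∀ x, a * x = 0 → x = 0) ∧ ∀ x, b * x ∈ Ideal.span {a} → x ∈ Ideal.span {a} := by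
  rw [isWeaklyRegular_pair_iff, isSMulRegular_iff_right_eq_zero_of_smul,
    smul_top_eq_span_singleton]
  simp only [smul_eq_mul]

end

/-- **The local computation underlying Proposition 10.2.**  Let `B` be a commutative ring,
`g` a nonzerodivisor, `(f₁', f₂')` a regular sequence in `B`, `f₁ = g·f₁'`, `f₂ = g·f₂'`.
Then (1) the kernel of `B² → B`, `(x,y) ↦ f₁x + f₂y` equals `B·(f₂', −f₁')`, which is free of
rank one; (2) the quotient of this kernel by `B·(f₂, −f₁)` is isomorphic to `B/(g)`. -/
theorem statement13
    (B : Type*) [CommRing B] (g f₁' f₂' : B)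
    (hg : ∀ x : B, g * x = 0 → x = 0)
    (hreg1 : ∀ x : B, f₁' * x = 0 → x = 0)
    (hreg2 : ∀ x : B, f₂' * x ∈ Ideal.span {f₁'} → x ∈ Ideal.span {f₁'}) :
    (LinearMap.ker ((LinearMap.mulLeft B (g * f₁')).coprod (LinearMap.mulLeft B (g * f₂'))) =
        Submodule.span B {((f₂', -f₁') : B × B)} ∧
      Nonempty (↥(Submodule.span B {((f₂', -f₁') : B × B)}) ≃ₗ[B] B)) ∧
    Nonempty
      ((↥(LinearMap.ker
            ((LinearMap.mulLeft B (g * f₁')).coprod (LinearMap.mulLeft B (g * f₂')))) ⧸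
          (Submodule.span B {((g * f₂', -(g * f₁')) : B × B)}).comap
            (LinearMap.ker
              ((LinearMap.mulLeft B (g * f₁')).coprod
                (LinearMap.mulLeft B (g * f₂')))).subtype) ≃ₗ[B]
        (B ⧸ Ideal.span {g})) := by
  have h := statement13_general (isSMulRegular_iff_right_eq_zero_of_smul.2 hg)
    (isWeaklyRegular_self_pair_iff.2 ⟨hreg1, hreg2⟩)
  rwa [range_koszulD₂_self, range_koszulD₂_self, smul_top_eq_span_singleton] at h
end
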